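/- arXiv:math/0606027 — 2 statements merged into one kernel-verified Lean document; each statement's English description precedes it below -/
import Mathlib

section
/- Let n ≥ 1 be odd, let G be a finite group acting freely and continuously on the unit sphere Sⁿ ⊂ ℝⁿ⁺¹, and let N = Sⁿ/G be the orbit space with the quotient topology (an odd-dimensional spherical space form). Let m ≥ 1 and let f₁, f₂ : Sᵐ → N be continuous maps that are homotopic to each other. Then MCC(f₁, f₂) = 0; that is, there exist continuous maps f₁' homotopic to f₁ and f₂' homotopic to f₂ with f₁'(x) ≠ f₂'(x) for every x ∈ Sᵐ. -/
/-- The minimum number of coincidence components: the infimum, over all pairs of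
continuous maps homotopic to `f₁` and `f₂` respectively, of the (extended-natural)
number of connected components of the coincidence set. -/
noncomputable def MCC {M N : Type*} [TopologicalSpace M] [TopologicalSpace N]
    (f₁ f₂ : C(M, N)) : ℕ∞ :=
  ⨅ (g₁ : C(M, N)) (_ : g₁.Homotopic f₁) (g₂ : C(M, N)) (_ : g₂.Homotopic f₂),
    ENat.card (ConnectedComponents {x : M // g₁ x = g₂ x})

/-!
An odd-dimensional sphere is the unit sphere of a complex vector space, so multiplication by
`exp (it)` moves every point off its orbit under the finite group `G` at all small times `t > 0`.
It therefore suffices to push `f₂ ≃ f₁` off itself with this flow. For `m ≥ 2` the map `f₁` lifts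
to `Sⁿ`, where the flow lives. For `m = 1` it lifts only to a path from some `y` to some `g • y`,
and since the flow need not commute with `g`, its two ends trace different curves issuing from
`g • y`: the flow line of `g • y` and the `g`-translate of the flow line of `y`. The homotopy
closes up once these two curves are joined by a square whose far edge avoids the orbit. For
`n ≥ 2` such a square exists in a chart, because there the complement of the finite orbit is path
connected. For `n = 1` it exists because `g` preserves the orientation of the circle: unless
`g = 1`, it has no fixed point and hence a lift to `ℝ` of the form `t ↦ t + α t` with `α`
periodic, which is injective and therefore increasing, so that both curves leave `g • y` in the
same direction.
-/

open Set Filter Topology Metric unitInterval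

section Loose

variable {M M' N : Type*} [TopologicalSpace M] [TopologicalSpace M'] [TopologicalSpace N]

/-- A pair of maps is loose (Koschorke) if it can be deformed to a coincidence-free pair. -/
def IsLoose (f₁ f₂ : C(M, N)) : Prop :=
  ∃ f₁' f₂' : C(M, N), f₁'.Homotopic f₁ ∧ f₂'.Homotopic f₂ ∧ ∀ x, f₁' x ≠ f₂' x

lemma IsLoose.trans_homotopic {f₁ f₂ f₃ : C(M, N)} (hf : IsLoose f₁ f₂) (h : f₂.Homotopic f₃) :
    IsLoose f₁ f₃ := by
  obtain ⟨f₁', f₂', h₁, h₂, hne⟩ := hf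
  exact ⟨f₁', f₂', h₁, h₂.trans h, hne⟩

lemma IsLoose.comp {f₁ f₂ : C(M, N)} (hf : IsLoose f₁ f₂) (g : C(M', M)) :
    IsLoose (f₁.comp g) (f₂.comp g) := by
  obtain ⟨f₁', f₂', h₁, h₂, hne⟩ := hf
  exact ⟨f₁'.comp g, f₂'.comp g, h₁.comp (.refl g), h₂.comp (.refl g), fun x => hne (g x)⟩

lemma IsLoose.mcc_eq_zero {f₁ f₂ : C(M, N)} (hf : IsLoose f₁ f₂) : MCC f₁ f₂ = 0 := by
  obtain ⟨f₁', f₂', h₁, h₂, hne⟩ := hf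
  have : IsEmpty {x : M // f₁' x = f₂' x} := ⟨fun x => hne x x.2⟩
  have : IsEmpty (ConnectedComponents {x : M // f₁' x = f₂' x}) := Quotient.instIsEmpty
  refine nonpos_iff_eq_zero.mp (iInf₂_le_of_le f₁' h₁ (iInf₂_le_of_le f₂' h₂ ?_))
  exact (ENat.card_eq_zero_iff_empty _).mpr this |>.le

end Loose

section Lifting

variable {M E N : Type*} [TopologicalSpace M] [TopologicalSpace E] [TopologicalSpace N]
  {p : E → N}

-- The van Kampen argument: lifts over the pieces with a common base value agree on overlaps.
lemma exists_lift_of_simplyConnected_cover [LocallyPathConnectedSpace M] {ι : Type*}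
    {S : ι → Set M} (hS : ∀ i, IsOpen (S i)) [∀ i, SimplyConnectedSpace (S i)]
    (hcover : ⋃ i, S i = univ) {x₀ : M} (hx₀ : ∀ i, x₀ ∈ S i)
    (hinter : ∀ i j, IsPreconnected (S i ∩ S j)) (hp : IsCoveringMap p)
    (hsurj : Function.Surjective p) (f : C(M, N)) :
    ∃ F : C(M, E), ∀ x, p (F x) = f x := by
  have (i : ι) : LocallyPathConnectedSpace (S i) := (hS i).locallyPathConnectedSpace
  obtain ⟨e₀, he₀⟩ := hsurj (f x₀)
  have hlift (i : ι) : ∃ F : C(S i, E), F ⟨x₀, hx₀ i⟩ = e₀ ∧ p ∘ F = f.restrict (S i) :=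
    (hp.existsUnique_continuousMap_lifts (f.restrict (S i)) ⟨x₀, hx₀ i⟩ e₀ he₀).exists
  choose F hF₀ hF using hlift
  have hagree (i j : ι) (x : M) (hi : x ∈ S i) (hj : x ∈ S j) : F i ⟨x, hi⟩ = F j ⟨x, hj⟩ := by
    have := isPreconnected_iff_preconnectedSpace.mp (hinter i j)
    let incl (k : ι) (h : S i ∩ S j ⊆ S k) : C(↥(S i ∩ S j), E) :=
      (F k).comp (ContinuousMap.inclusion h)
    refine congrFun (hp.eq_of_comp_eq (incl i inter_subset_left).continuous
      (incl j inter_subset_right).continuous ?_ ⟨x₀, hx₀ i, hx₀ j⟩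
      ((hF₀ i).trans (hF₀ j).symm)) ⟨x, hi, hj⟩
    ext z
    exact (congrFun (hF i) ⟨z, z.2.1⟩).trans (congrFun (hF j) ⟨z, z.2.2⟩).symm
  have hnhds (x : M) : ∃ i, S i ∈ 𝓝 x :=
    (iUnion_eq_univ_iff.mp hcover x).imp fun i hi => (hS i).mem_nhds hi
  refine ⟨ContinuousMap.liftCover S F hagree hnhds, fun x => ?_⟩
  obtain ⟨i, hi⟩ := iUnion_eq_univ_iff.mp hcover x
  rw [ContinuousMap.liftCover_coe (⟨x, hi⟩ : S i)]
  exact congrFun (hF i) ⟨x, hi⟩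

end Lifting

section Sphere

variable {E : Type*} [NormedAddCommGroup E] [InnerProductSpace ℝ E]

lemma exists_isOpenEmbedding_range_eq_compl_singleton (v : sphere (0 : E) 1) :
    ∃ φ : (ℝ ∙ (v : E))ᗮ → sphere (0 : E) 1, IsOpenEmbedding φ ∧ range φ = {v}ᶜ := by
  have hv : ‖(v : E)‖ = 1 := norm_eq_of_mem_sphere v
  let φ := (stereographic hv).symm
  have hsource : φ.source = univ := stereographic_target hv
  refine ⟨φ, φ.isOpenEmbedding hsource, ?_⟩
  rw [← image_univ, ← hsource, φ.image_source_eq_target]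
  exact stereographic_source hv

lemma simplyConnectedSpace_compl_singleton_sphere (v : sphere (0 : E) 1) :
    SimplyConnectedSpace ({v}ᶜ : Set (sphere (0 : E) 1)) := by
  obtain ⟨φ, hφ, hrange⟩ := exists_isOpenEmbedding_range_eq_compl_singleton v
  have := (hφ.isEmbedding.toHomeomorph.trans (.setCongr hrange)).symm.contractibleSpace
  infer_instance

variable {n : ℕ} [Fact (Module.finrank ℝ E = n + 1)]

lemma one_lt_rank_orthogonal_span_singleton (hn : 2 ≤ n) (v : sphere (0 : E) 1) :
    1 < Module.rank ℝ (ℝ ∙ (v : E))ᗮ := by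
  have := FiniteDimensional.of_fact_finrank_eq_succ (K := ℝ) (V := E) n
  rw [← Module.finrank_eq_rank,
    Submodule.finrank_orthogonal_span_singleton (n := n) (ne_zero_of_mem_unit_sphere v)]
  exact_mod_cast hn

lemma isPathConnected_compl_sphere_of_countable (hn : 2 ≤ n) {S : Set (sphere (0 : E) 1)}
    (hS : S.Countable) (hne : S.Nonempty) : IsPathConnected Sᶜ := by
  obtain ⟨v, hv⟩ := hne
  obtain ⟨φ, hφ, hrange⟩ := exists_isOpenEmbedding_range_eq_compl_singleton v
  have himage : φ '' (φ ⁻¹' S)ᶜ = Sᶜ := by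
    rw [image_compl_preimage, hrange, sdiff_eq, inter_eq_right]
    exact compl_subset_compl.mpr (singleton_subset_iff.mpr hv)
  rw [← himage]
  exact ((hS.preimage_of_injOn hφ.injective.injOn).isPathConnected_compl_of_one_lt_rank
    (one_lt_rank_orthogonal_span_singleton hn v)).image hφ.continuous

lemma exists_lift_sphere (hn : 2 ≤ n) {X N : Type*} [TopologicalSpace X] [TopologicalSpace N]
    {p : X → N} (hp : IsCoveringMap p) (hsurj : Function.Surjective p)
    (f : C(sphere (0 : E) 1, N)) : ∃ F : C(sphere (0 : E) 1, X), ∀ x, p (F x) = f x := by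
  have hcompl (v w : sphere (0 : E) 1) : IsPathConnected ({v, w}ᶜ : Set (sphere (0 : E) 1)) :=
    isPathConnected_compl_sphere_of_countable hn (to_countable _) (insert_nonempty _ _)
  have := ChartedSpace.locallyPathConnectedSpace (EuclideanSpace ℝ (Fin n)) (sphere (0 : E) 1)
  obtain ⟨x₀⟩ : Nonempty (sphere (0 : E) 1) := by
    have : Nontrivial E := Module.nontrivial_of_finrank_pos (R := ℝ)
      (Fact.out (p := Module.finrank ℝ E = n + 1) ▸ n.succ_pos)
    exact (NormedSpace.sphere_nonempty.mpr zero_le_one).to_subtype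
  have (v : {v // v ≠ x₀}) := simplyConnectedSpace_compl_singleton_sphere v.1
  refine exists_lift_of_simplyConnected_cover (S := fun v : {v // v ≠ x₀} => {v.1}ᶜ)
    (fun _ => isOpen_compl_singleton) (iUnion_eq_univ_iff.mpr fun x => ?_)
    (fun v => v.2.symm) (fun v w => ?_) hp hsurj f
  · obtain ⟨v, hv⟩ := (hcompl x₀ x).nonempty
    simp only [mem_compl_iff, mem_insert_iff, mem_singleton_iff, not_or] at hv
    exact ⟨⟨v, hv.1⟩, Ne.symm hv.2⟩
  · rw [← compl_union, singleton_union]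
    exact (hcompl v w).isConnected.isPreconnected

end Sphere

section OrbitSpace

variable {G X : Type*} [TopologicalSpace X] [Group G] [MulAction G X]

variable (G X) in
/-- The projection to the orbit space, as a bundled continuous map. -/
def orbitProj : C(X, Quotient (MulAction.orbitRel G X)) :=
  ⟨Quotient.mk _, continuous_quotient_mk'⟩

lemma orbitProj_eq_iff {x y : X} : orbitProj G X x = orbitProj G X y ↔ x ∈ MulAction.orbit G y :=
  Quotient.eq

lemma surjective_orbitProj : Function.Surjective (orbitProj G X) :=
  Quotient.mk_surjective

lemma isCoveringMap_orbitProj [ContinuousConstSMul G X] [ProperlyDiscontinuousSMul G X]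
    [LocallyCompactSpace X] [T2Space X] [IsCancelSMul G X] : IsCoveringMap (orbitProj G X) :=
  isQuotientCoveringMap_quotientMk_of_properlyDiscontinuousSMul.isCoveringMap

variable (G) in
/-- A deformation `Φ` of the identity of `X` that moves every point off its own `G`-orbit at all
small positive times. It plays the role of a nowhere zero vector field on the orbit space. -/
structure IsOrbitEscaping (Φ : C(ℝ × X, X)) : Prop where
  zero_apply : ∀ x, Φ (0, x) = x
  eventually_notMem_orbit : ∀ᶠ t in 𝓝[>] (0 : ℝ), ∀ x, Φ (t, x) ∉ MulAction.orbit G x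

-- A nontrivial group element has positive displacement by compactness, so short times beat it.
lemma isOrbitEscaping_of_eventually_ne [Finite G] [CompactSpace X] [T2Space X]
    [ContinuousConstSMul G X] [IsCancelSMul G X] {Φ : C(ℝ × X, X)} (hΦ₀ : ∀ x, Φ (0, x) = x)
    (hΦ : ∀ᶠ t in 𝓝[>] (0 : ℝ), ∀ x, Φ (t, x) ≠ x) : IsOrbitEscaping G Φ := by
  have hsmul (g : G) (hg : g ≠ 1) : ∀ᶠ t in 𝓝 (0 : ℝ), ∀ x, Φ (t, x) ≠ g • x := by
    suffices ∀ᶠ t in 𝓝 (0 : ℝ), ∀ x ∈ univ, Φ (t, x) ≠ g • x by simpa using this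
    refine isCompact_univ.eventually_forall_of_forall_eventually fun x _ => ?_
    have hopen : IsOpen {z : ℝ × X | Φ z ≠ g • z.2} := isOpen_ne_fun (by fun_prop) (by fun_prop)
    refine hopen.mem_nhds fun h => hg ?_
    exact isCancelSMul_iff_eq_one_of_smul_eq.mp inferInstance g x (h.symm.trans (hΦ₀ x))
  have hall : ∀ᶠ t in 𝓝 (0 : ℝ), ∀ g : G, g ≠ 1 → ∀ x, Φ (t, x) ≠ g • x :=
    eventually_all.mpr fun g => eventually_imp_distrib_left.mpr (hsmul g)
  refine ⟨hΦ₀, ?_⟩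
  filter_upwards [hΦ, hall.filter_mono nhdsWithin_le_nhds] with t hne hsmul
  rintro x ⟨g, hg⟩
  obtain rfl | hg₁ := eq_or_ne g 1
  · exact hne x (hg.symm.trans (one_smul G x))
  · exact hsmul g hg₁ x hg.symm

lemma IsOrbitEscaping.isLoose_of_lift {Φ : C(ℝ × X, X)} (hΦ : IsOrbitEscaping G Φ) {M : Type*}
    [TopologicalSpace M] {f : C(M, Quotient (MulAction.orbitRel G X))} {F : C(M, X)}
    (hF : ∀ x, orbitProj G X (F x) = f x) : IsLoose f f := by
  obtain ⟨ε, hε⟩ := hΦ.eventually_notMem_orbit.exists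
  let H : C(I × M, Quotient (MulAction.orbitRel G X)) :=
    (orbitProj G X).comp ⟨fun z => Φ (ε * z.1, F z.2), by fun_prop⟩
  refine ⟨H.curry 1, f, ContinuousMap.Homotopic.symm ⟨⟨H, fun x => ?_, fun _ => rfl⟩⟩, .refl f,
    fun x => ?_⟩
  · simpa [H, hΦ.zero_apply] using hF x
  · rw [← hF x]
    simpa [H, orbitProj_eq_iff] using hε (F x)

end OrbitSpace

section CircleMaps

variable {Y : Type*} [TopologicalSpace Y]

lemma exists_unitInterval_coe_eq (x : UnitAddCircle) : ∃ u : I, ((u : ℝ) : UnitAddCircle) = x := by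
  have hx : x ∈ ((↑) : ℝ → UnitAddCircle) '' Icc 0 (0 + 1) := by
    rw [AddCircle.coe_image_Icc_eq]; trivial
  obtain ⟨t, ht, rfl⟩ := hx
  exact ⟨⟨t, by simpa using ht⟩, rfl⟩

lemma exists_circle_map_of_zero_eq_one (F : C(I, Y)) (hF : F 0 = F 1) :
    ∃ f : C(UnitAddCircle, Y), ∀ u : I, f (u : ℝ) = F u := by
  let F' : C(ℝ, Y) := F.IccExtend zero_le_one
  have hF' (u : I) : F' u = F u := IccExtend_val _ _ _
  have h₀₁ : F' 0 = F' 1 := (hF' 0).trans (hF.trans (hF' 1).symm)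
  refine ⟨⟨AddCircle.liftIco 1 0 F', AddCircle.liftIco_zero_continuous h₀₁
    F'.continuous.continuousOn⟩, fun u => ?_⟩
  obtain hu | hu := u.2.2.lt_or_eq
  · exact (AddCircle.liftIco_zero_coe_apply ⟨u.2.1, hu⟩).trans (hF' u)
  · obtain rfl : u = 1 := Subtype.ext hu
    have h₁ : ((1 : ℝ) : UnitAddCircle) = ((0 : ℝ) : UnitAddCircle) := by
      simp [AddCircle.coe_period]
    simp only [ContinuousMap.coe_mk, Icc.coe_one, h₁]
    rw [AddCircle.liftIco_zero_coe_apply ⟨le_rfl, one_pos⟩]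
    exact h₀₁.trans (hF' 1)

-- The square is a loop in the space of paths `C(I, Y)`.
lemma circle_homotopic_of_square (H : C(I × I, Y)) (hH : ∀ t, H (0, t) = H (1, t))
    {f₀ f₁ : C(UnitAddCircle, Y)} (h₀ : ∀ u : I, f₀ (u : ℝ) = H (u, 0))
    (h₁ : ∀ u : I, f₁ (u : ℝ) = H (u, 1)) : f₀.Homotopic f₁ := by
  obtain ⟨Λ, hΛ⟩ := exists_circle_map_of_zero_eq_one H.curry (ContinuousMap.ext hH)
  refine ⟨⟨⟨fun z => Λ z.2 z.1, by fun_prop⟩, fun x => ?_, fun x => ?_⟩⟩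
  · obtain ⟨u, rfl⟩ := exists_unitInterval_coe_eq x
    simp [hΛ, h₀]
  · obtain ⟨u, rfl⟩ := exists_unitInterval_coe_eq x
    simp [hΛ, h₁]

lemma circle_homotopic_of_path_homotopic {X : Type*} [TopologicalSpace X] (π : C(X, Y)) {x y : X}
    (hxy : π x = π y) {P Q : Path x y} (hPQ : P.Homotopic Q) {f₀ f₁ : C(UnitAddCircle, Y)}
    (h₀ : ∀ u : I, f₀ (u : ℝ) = π (P u)) (h₁ : ∀ u : I, f₁ (u : ℝ) = π (Q u)) :
    f₀.Homotopic f₁ := by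
  obtain ⟨R⟩ := hPQ
  exact circle_homotopic_of_square (π.comp ⟨fun z => R (z.2, z.1), by fun_prop⟩)
    (fun t => by simpa using hxy) (fun u => by simp [h₀]) (fun u => by simp [h₁])

end CircleMaps

section TwistedLoops

variable {G X : Type*} [TopologicalSpace X] [Group G] [MulAction G X]

lemma exists_twisted_lift (hp : IsCoveringMap (orbitProj G X))
    (f : C(UnitAddCircle, Quotient (MulAction.orbitRel G X))) :
    ∃ (F : C(I, X)) (g : G), F 1 = g • F 0 ∧ ∀ u : I, orbitProj G X (F u) = f (u : ℝ) := by
  let γ : C(I, Quotient (MulAction.orbitRel G X)) := ⟨fun u => f (u : ℝ), by fun_prop⟩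
  obtain ⟨y, hy⟩ := surjective_orbitProj (γ 0)
  obtain ⟨F, hF, -⟩ := hp.exists_path_lifts γ y hy.symm
  have hend : orbitProj G X (F 1) = orbitProj G X (F 0) := by
    refine (congrFun hF 1).trans (Eq.trans ?_ (congrFun hF 0).symm)
    simp [γ, AddCircle.coe_period]
  obtain ⟨g, hg⟩ := orbitProj_eq_iff.mp hend
  exact ⟨F, g, hg.symm, congrFun hF⟩

lemma exists_homotopic_of_twisted_homotopy [ContinuousConstSMul G X] {g : G} {c : C(I, X)}
    (K : c.Homotopy (g • c)) :
    ∃ f₀ f₁ : C(UnitAddCircle, Quotient (MulAction.orbitRel G X)), f₀.Homotopic f₁ ∧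
      (∀ u : I, f₀ (u : ℝ) = orbitProj G X (K (u, 0))) ∧
      ∀ u : I, f₁ (u : ℝ) = orbitProj G X (K (u, 1)) := by
  let H : C(I × I, Quotient (MulAction.orbitRel G X)) := (orbitProj G X).comp K.toContinuousMap
  have hH (t : I) : H (0, t) = H (1, t) := by
    refine (orbitProj_eq_iff.mpr ?_).symm
    simp [MulAction.mem_orbit]
  have hedge (t : I) := exists_circle_map_of_zero_eq_one (H.comp (.prodMk (.id I) (.const I t)))
    (hH t)
  obtain ⟨f₀, h₀⟩ := hedge 0
  obtain ⟨f₁, h₁⟩ := hedge 1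
  exact ⟨f₀, f₁, circle_homotopic_of_square H hH h₀ h₁, h₀, h₁⟩

/-- The flow line of `x` under `Φ` during the time interval `[0, ε]`, parametrised by `I`. -/
def flowLine (Φ : C(ℝ × X, X)) (ε : ℝ) (x : X) : C(I, X) := ⟨fun t => Φ (ε * t, x), by fun_prop⟩

@[simp]
lemma flowLine_apply (Φ : C(ℝ × X, X)) (ε : ℝ) (x : X) (t : I) :
    flowLine Φ ε x t = Φ (ε * t, x) := rfl

/-- The short flow line of `g • y` and the `g`-translate of the flow line of `y` are joined by a
homotopy which fixes the common starting point `g • y` and moves the end points off its orbit. Such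
a square closes up the flow of a path from `y` to `g • y` to a homotopy of loops in the orbit
space. -/
def HasEscapingSquare [ContinuousConstSMul G X] (Φ : C(ℝ × X, X)) (g : G) (y : X) : Prop :=
  ∃ ε : ℝ, (∀ x, Φ (ε, x) ∉ MulAction.orbit G x) ∧
    ∃ W : (flowLine Φ ε (g • y)).Homotopy (g • flowLine Φ ε y),
      (∀ v, W (v, 0) = g • y) ∧ ∀ v, W (v, 1) ∉ MulAction.orbit G (g • y)

lemma isLoose_circle_of_hasEscapingSquare [ContinuousConstSMul G X] {Φ : C(ℝ × X, X)}
    (hΦ₀ : ∀ x, Φ (0, x) = x) (hsq : ∀ (g : G) (y : X), HasEscapingSquare Φ g y)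
    (hp : IsCoveringMap (orbitProj G X))
    (f : C(UnitAddCircle, Quotient (MulAction.orbitRel G X))) : IsLoose f f := by
  obtain ⟨F, g, hg, hF⟩ := exists_twisted_lift hp f
  obtain ⟨ε, hε, W, hW₀, hW₁⟩ := hsq g (F 0)
  let P : Path (F 0) (g • F 0) := ⟨F, rfl, hg⟩
  let H : (flowLine Φ ε (F 0)).Homotopy (flowLine Φ ε (g • F 0)) :=
    ⟨⟨fun z => Φ (ε * z.2, F z.1), by fun_prop⟩, fun _ => rfl, fun t => by simp [hg]⟩
  have hH (z : I × I) : H z = Φ (ε * z.2, F z.1) := rfl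
  let K := H.trans W
  have hbottom (u : I) : K (u, 0) = (P.trans (.refl _)) u := by
    rw [ContinuousMap.Homotopy.trans_apply, Path.trans_apply]
    split_ifs
    · simp only [hH, Icc.coe_zero, mul_zero, hΦ₀]; rfl
    · exact hW₀ _
  have htop (u : I) : K (u, 1) ∉ MulAction.orbit G (K (u, 0)) := by
    simp only [K, ContinuousMap.Homotopy.trans_apply]
    split_ifs
    · simpa only [hH, Icc.coe_zero, Icc.coe_one, mul_zero, mul_one, hΦ₀] using hε _
    · simpa only [hW₀] using hW₁ _
  obtain ⟨f₀, f₁, h₀₁, h₀, h₁⟩ := exists_homotopic_of_twisted_homotopy K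
  have hf : f₀.Homotopic f := circle_homotopic_of_path_homotopic (orbitProj G X)
    (orbitProj_eq_iff.mpr (by simp)) ⟨Path.Homotopy.transRefl P⟩
    (fun u => by rw [h₀, hbottom]) (fun u => (hF u).symm)
  refine ⟨f₁, f₀, h₀₁.symm.trans hf, hf, fun x => ?_⟩
  obtain ⟨u, rfl⟩ := exists_unitInterval_coe_eq x
  rw [h₀, h₁]
  exact fun h => htop u (orbitProj_eq_iff.mp h)

end TwistedLoops

section RotationFlow

variable {X Y : Type*} [TopologicalSpace X] [TopologicalSpace Y] [MulAction Circle Y]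
  [ContinuousSMul Circle Y]

/-- The flow on `X` obtained from a circle action on a homeomorphic space `Y`. -/
noncomputable def rotationFlow (e : X ≃ₜ Y) : C(ℝ × X, X) :=
  ⟨fun z => e.symm (Circle.exp z.1 • e z.2), by fun_prop⟩

lemma apply_rotationFlow (e : X ≃ₜ Y) (t : ℝ) (x : X) :
    e (rotationFlow e (t, x)) = Circle.exp t • e x :=
  e.apply_symm_apply _

lemma rotationFlow_zero (e : X ≃ₜ Y) (x : X) : rotationFlow e (0, x) = x :=
  e.injective (by simp [apply_rotationFlow])

lemma eventually_circle_exp_ne_one : ∀ᶠ t in 𝓝[>] (0 : ℝ), Circle.exp t ≠ 1 := by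
  filter_upwards [Ioo_mem_nhdsGT Real.pi_pos] with t ht hexp
  have harg := Circle.arg_exp (by linarith [ht.1, Real.pi_pos]) ht.2.le
  rw [hexp, Circle.coe_one, Complex.arg_one] at harg
  exact ht.1.ne harg

lemma isOrbitEscaping_rotationFlow {G : Type*} [Group G] [MulAction G X] [Finite G]
    [CompactSpace X] [T2Space X] [ContinuousConstSMul G X] [IsCancelSMul G X]
    [IsCancelSMul Circle Y] (e : X ≃ₜ Y) : IsOrbitEscaping G (rotationFlow e) := by
  refine isOrbitEscaping_of_eventually_ne (rotationFlow_zero e) ?_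
  filter_upwards [eventually_circle_exp_ne_one] with t ht x hx
  refine ht (isCancelSMul_iff_eq_one_of_smul_eq.mp inferInstance _ (e x) ?_)
  rw [← apply_rotationFlow, hx]

end RotationFlow

section CircleSquare

lemma exists_circle_exp_lift_of_ne_one {M : Type*} [TopologicalSpace M] {w : M → Circle}
    (hw : Continuous w) (hne : ∀ x, w x ≠ 1) : ∃ α : C(M, ℝ), ∀ x, Circle.exp (α x) = w x := by
  -- Multiplying by `-1` moves `w` into the domain of continuity of `arg`.
  let w' (x : M) : Circle := Circle.exp Real.pi * w x
  have hslit (x : M) : (w' x : ℂ) ∈ Complex.slitPlane := by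
    refine Complex.mem_slitPlane_iff_arg.mpr ⟨fun harg => hne x ?_, Circle.coe_ne_zero _⟩
    have hw' : Circle.exp Real.pi * w x = Circle.exp Real.pi := by
      rw [← Circle.exp_arg (Circle.exp Real.pi * w x), harg]
    exact mul_eq_left.mp hw'
  have harg : Continuous fun x => Complex.arg (w' x) :=
    Complex.continuousOn_arg.comp_continuous (by fun_prop) hslit
  refine ⟨⟨fun x => Complex.arg (w' x) - Real.pi, by fun_prop⟩, fun x => ?_⟩
  simp only [ContinuousMap.coe_mk, Circle.exp_sub, Circle.exp_arg]
  exact mul_div_cancel_left _ _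

lemma exists_strictMono_circle_lift {h : Circle → Circle} (hinj : Function.Injective h)
    {α : C(Circle, ℝ)} (hα : ∀ x, h x = Circle.exp (α x) * x) (y : Circle) :
    ∃ T : ℝ → ℝ, Continuous T ∧ StrictMono T ∧ T 0 = 0 ∧
      ∀ t, h (Circle.exp t * y) = Circle.exp (T t) * h y := by
  let T (t : ℝ) : ℝ := t + α (Circle.exp t * y) - α y
  have hT : Continuous T := by fun_prop
  have hTexp (t : ℝ) : h (Circle.exp t * y) = Circle.exp (T t) * h y := by
    rw [hα, hα y, Circle.exp_sub, Circle.exp_add, ← mul_assoc (_ / _), div_mul_cancel, mul_assoc,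
      mul_left_comm]
  have hTinj : Function.Injective T := by
    intro s t hst
    have hexp : Circle.exp s = Circle.exp t :=
      mul_right_cancel (hinj (by rw [hTexp, hTexp, hst]) : Circle.exp s * y = Circle.exp t * y)
    simpa [T, hexp] using hst
  have hT₀ : T 0 = 0 := by simp [T]
  have hT₁ : T (2 * Real.pi) = 2 * Real.pi := by simp [T]
  refine ⟨T, hT, (hT.strictMono_of_inj hTinj).resolve_right fun hanti => ?_, hT₀, hTexp⟩
  exact (hanti Real.two_pi_pos).not_gt (by rw [hT₀, hT₁]; exact Real.two_pi_pos)

variable {G X : Type*} [TopologicalSpace X] [Group G] [MulAction G X] [ContinuousConstSMul G X]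
  [IsCancelSMul G X]

lemma exists_strictMono_smul_rotationFlow (e : X ≃ₜ Circle) (g : G) (y : X) :
    ∃ T : ℝ → ℝ, Continuous T ∧ StrictMono T ∧ T 0 = 0 ∧
      ∀ t, g • rotationFlow e (t, y) = rotationFlow e (T t, g • y) := by
  let h (x : Circle) : Circle := e (g • e.symm x)
  have hinj : Function.Injective h :=
    e.injective.comp ((MulAction.injective g).comp e.symm.injective)
  obtain ⟨α, hα⟩ : ∃ α : C(Circle, ℝ), ∀ x, h x = Circle.exp (α x) * x := by
    obtain rfl | hg := eq_or_ne g 1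
    · exact ⟨0, fun x => by simp [h]⟩
    · have hne (x : Circle) : h x / x ≠ 1 := fun hx => hg <|
        isCancelSMul_iff_eq_one_of_smul_eq.mp inferInstance g (e.symm x)
          (e.eq_symm_apply.mpr (div_eq_one.mp hx))
      obtain ⟨α, hα⟩ := exists_circle_exp_lift_of_ne_one (by fun_prop) hne
      exact ⟨α, fun x => by rw [hα, div_mul_cancel]⟩
  obtain ⟨T, hT, hmono, hT₀, hTexp⟩ := exists_strictMono_circle_lift hinj hα (e y)
  refine ⟨T, hT, hmono, hT₀, fun t => e.injective ?_⟩
  rw [apply_rotationFlow, ← e.symm_apply_apply (rotationFlow e (t, y)), apply_rotationFlow]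
  simpa [h] using hTexp t

-- `g` carries the flow line of `y` to a monotone reparametrisation of the flow line of `g • y`;
-- the square interpolates linearly between the two parametrisations.
lemma IsOrbitEscaping.hasEscapingSquare_rotationFlow {e : X ≃ₜ Circle}
    (hΦ : IsOrbitEscaping G (rotationFlow e)) (g : G) (y : X) :
    HasEscapingSquare (rotationFlow e) g y := by
  obtain ⟨T, hT, hmono, hT₀, hsmul⟩ := exists_strictMono_smul_rotationFlow e g y
  obtain ⟨δ, hδ, hgood⟩ := mem_nhdsGT_iff_exists_Ioo_subset.mp hΦ.eventually_notMem_orbit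
  have hTδ : ∀ᶠ t in 𝓝[>] (0 : ℝ), T t < δ :=
    (hT.tendsto' 0 0 hT₀).mono_left nhdsWithin_le_nhds |>.eventually_lt_const hδ
  have hIoo : ∀ᶠ t in 𝓝[>] (0 : ℝ), t ∈ Ioo 0 δ := Ioo_mem_nhdsGT hδ
  obtain ⟨ε, hε, hTε⟩ := (hIoo.and hTδ).exists
  have hTε' : T ε ∈ Ioo 0 δ := ⟨hT₀ ▸ hmono hε.1, hTε⟩
  let s (v : I) (t : ℝ) : ℝ := AffineMap.lineMap t (T t) (v : ℝ)
  have hs (v : I) : s v 0 = 0 := by simp [s, hT₀]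
  have hsδ (v : I) : s v ε ∈ Ioo 0 δ :=
    (convex_Ioo 0 δ).lineMap_mem hε hTε' v.2
  have hs_cont : Continuous fun z : I × I => s z.1 (ε * z.2) := by
    simp only [s, AffineMap.lineMap_apply]
    fun_prop
  let W : (flowLine (rotationFlow e) ε (g • y)).Homotopy (g • flowLine (rotationFlow e) ε y) :=
    ⟨⟨fun z => rotationFlow e (s z.1 (ε * z.2), g • y),
        (rotationFlow e).continuous.comp (hs_cont.prodMk continuous_const)⟩,
      fun t => by simp [s], fun t => by simp [s, hsmul]⟩
  have hW (v t : I) : W (v, t) = rotationFlow e (s v (ε * t), g • y) := rfl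
  refine ⟨ε, hgood hε, W, fun v => ?_, fun v => ?_⟩
  · rw [hW, Icc.coe_zero, mul_zero, hs, rotationFlow_zero]
  · rw [hW, Icc.coe_one, mul_one]
    exact hgood (hsδ v) (g • y)

end CircleSquare

section ChartSquare

lemma exists_homotopy_of_path {V : Type*} [AddCommGroup V] [Module ℝ V] [TopologicalSpace V]
    [IsTopologicalAddGroup V] [ContinuousSMul ℝ V] {a b : C(I, V)} (h₀ : a 0 = b 0)
    (w : Path (a 1) (b 1)) :
    ∃ W : a.Homotopy b, (∀ v, W (v, 0) = a 0) ∧ ∀ v, W (v, 1) = w v := by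
  -- The straight-line homotopy, sheared so that its end points follow `w`.
  let W : a.Homotopy b :=
    ⟨⟨fun z => AffineMap.lineMap (a z.2) (b z.2) (z.1 : ℝ) +
        (z.2 : ℝ) • (w z.1 - AffineMap.lineMap (a 1) (b 1) (z.1 : ℝ)), by
      simp only [AffineMap.lineMap_apply_module]
      fun_prop⟩, fun t => by simp, fun t => by simp⟩
  have hW (v t : I) : W (v, t) = AffineMap.lineMap (a t) (b t) (v : ℝ) +
    (t : ℝ) • (w v - AffineMap.lineMap (a 1) (b 1) (v : ℝ)) := rfl
  exact ⟨W, fun v => by simp [hW, h₀], fun v => by simp [hW]⟩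

variable {V : Type*} [AddCommGroup V] [Module ℝ V] [TopologicalSpace V] [IsTopologicalAddGroup V]
  [ContinuousSMul ℝ V] {X : Type*} [TopologicalSpace X]

lemma exists_homotopy_forall_notMem_of_isEmbedding (hV : 1 < Module.rank ℝ V) {φ : V → X}
    (hφ : IsEmbedding φ) {a b : C(I, X)} (ha : ∀ t, a t ∈ range φ) (hb : ∀ t, b t ∈ range φ)
    (h₀ : a 0 = b 0) {S : Set X} (hS : S.Countable) (ha₁ : a 1 ∉ S) (hb₁ : b 1 ∉ S) :
    ∃ W : a.Homotopy b, (∀ v, W (v, 0) = a 0) ∧ ∀ v, W (v, 1) ∉ S := by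
  have hlift (c : C(I, X)) (hc : ∀ t, c t ∈ range φ) : ∃ c' : C(I, V), ∀ t, φ (c' t) = c t := by
    choose c' hc' using hc
    have hcomp : φ ∘ c' = c := funext hc'
    exact ⟨⟨c', hφ.continuous_iff.mpr (hcomp ▸ c.continuous)⟩, hc'⟩
  obtain ⟨a', ha'⟩ := hlift a ha
  obtain ⟨b', hb'⟩ := hlift b hb
  have hpath : IsPathConnected (φ ⁻¹' S)ᶜ :=
    (hS.preimage_of_injOn hφ.injective.injOn).isPathConnected_compl_of_one_lt_rank hV
  obtain ⟨w, hw⟩ := hpath.joinedIn (a' 1) (by simpa [ha']) (b' 1) (by simpa [hb'])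
  obtain ⟨W, hW₀, hW₁⟩ := exists_homotopy_of_path
    (hφ.injective (by rw [ha', hb', h₀]) : a' 0 = b' 0) w
  let φ' : C(V, X) := ⟨φ, hφ.continuous⟩
  refine ⟨((ContinuousMap.Homotopy.refl φ').comp W).cast (ContinuousMap.ext ha')
    (ContinuousMap.ext hb'), fun v => ?_, fun v => ?_⟩
  · simpa [φ', hW₀] using ha' 0
  · simpa [φ', hW₁] using hw v

lemma eventually_forall_flowLine_mem {Φ : C(ℝ × X, X)} {x : X} {U : Set X} (hU : IsOpen U)
    (hx : Φ (0, x) ∈ U) : ∀ᶠ ε in 𝓝 (0 : ℝ), ∀ t, flowLine Φ ε x t ∈ U := by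
  suffices ∀ᶠ ε in 𝓝 (0 : ℝ), ∀ t ∈ univ, flowLine Φ ε x t ∈ U by simpa using this
  refine isCompact_univ.eventually_forall_of_forall_eventually fun t _ => ?_
  have hcont : Continuous fun z : ℝ × I => flowLine Φ z.1 x z.2 := by
    simp only [flowLine_apply]
    fun_prop
  exact hcont.continuousAt.eventually (hU.mem_nhds (by simpa using hx))

lemma IsOrbitEscaping.hasEscapingSquare_of_isOpenEmbedding {G : Type*} [Group G] [MulAction G X]
    [ContinuousConstSMul G X] [Countable G] {Φ : C(ℝ × X, X)} (hΦ : IsOrbitEscaping G Φ)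
    (hV : 1 < Module.rank ℝ V) {φ : V → X} (hφ : IsOpenEmbedding φ) {g : G} {y : X}
    (hy : g • y ∈ range φ) : HasEscapingSquare Φ g y := by
  have ha : ∀ᶠ ε in 𝓝 (0 : ℝ), ∀ t, flowLine Φ ε (g • y) t ∈ range φ :=
    eventually_forall_flowLine_mem hφ.isOpen_range (by rwa [hΦ.zero_apply])
  have hb : ∀ᶠ ε in 𝓝 (0 : ℝ), ∀ t, flowLine Φ ε y t ∈ (g • ·) ⁻¹' range φ :=
    eventually_forall_flowLine_mem (hφ.isOpen_range.preimage (continuous_const_smul g))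
      (by simpa [hΦ.zero_apply] using hy)
  obtain ⟨ε, hε, haε, hbε⟩ := (hΦ.eventually_notMem_orbit.and
    ((ha.and hb).filter_mono nhdsWithin_le_nhds)).exists
  have hstart : flowLine Φ ε (g • y) 0 = g • y := by simp [hΦ.zero_apply]
  obtain ⟨W, hW₀, hW₁⟩ := exists_homotopy_forall_notMem_of_isEmbedding hV hφ.isEmbedding
    (a := flowLine Φ ε (g • y)) (b := g • flowLine Φ ε y) (S := MulAction.orbit G (g • y))
    haε hbε (by simp [hΦ.zero_apply]) (countable_range _) (by simpa using hε (g • y))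
    (by simpa [← MulAction.orbit_eq_iff] using hε y)
  exact ⟨ε, hε, W, fun v => (hW₀ v).trans hstart, hW₁⟩

end ChartSquare

section CircleAction

variable {V : Type*} [NormedAddCommGroup V] [NormedSpace ℂ V]

/-- Scalar multiplication by unit complex numbers, transported from the action of the unit sphere of
`ℂ`, which is definitionally `Circle`. -/
noncomputable instance instMulActionCircleSphere : MulAction Circle (sphere (0 : V) 1) :=
  inferInstanceAs (MulAction (sphere (0 : ℂ) 1) (sphere (0 : V) 1))

instance instContinuousSMulCircleSphere : ContinuousSMul Circle (sphere (0 : V) 1) :=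
  inferInstanceAs (ContinuousSMul (sphere (0 : ℂ) 1) (sphere (0 : V) 1))

instance instIsCancelSMulCircleSphere : IsCancelSMul Circle (sphere (0 : V) 1) := by
  refine isCancelSMul_iff_eq_one_of_smul_eq.mpr fun c x hx => Circle.ext ?_
  have hx' : (c : ℂ) • (x : V) = (1 : ℂ) • (x : V) := by
    rw [one_smul]
    exact congrArg Subtype.val hx
  exact smul_left_injective ℂ (ne_zero_of_mem_unit_sphere x) hx'

end CircleAction

section SpaceForm

variable {E F : Type*} [NormedAddCommGroup E] [InnerProductSpace ℝ E] [NormedAddCommGroup F]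
  [InnerProductSpace ℝ F]

lemma nonempty_homeomorph_sphere_of_finrank_eq [FiniteDimensional ℝ E] [FiniteDimensional ℝ F]
    (h : Module.finrank ℝ E = Module.finrank ℝ F) :
    Nonempty (sphere (0 : E) 1 ≃ₜ sphere (0 : F) 1) := by
  let L : E ≃ₗᵢ[ℝ] F := (stdOrthonormalBasis ℝ E).equiv (stdOrthonormalBasis ℝ F) (finCongr h)
  exact ⟨L.toHomeomorph.subtype fun x => by simp [L.norm_map]⟩

lemma nonempty_homeomorph_sphere_circle (h : Module.finrank ℝ E = 2) :
    Nonempty (sphere (0 : E) 1 ≃ₜ Circle) := by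
  have := Module.finite_of_finrank_pos (R := ℝ) (M := E) (by omega)
  exact nonempty_homeomorph_sphere_of_finrank_eq (F := ℂ)
    (h.trans Complex.finrank_real_complex.symm)

variable {G : Type*} [Group G] [Finite G] [MulAction G (sphere (0 : F) 1)]
  [ContinuousConstSMul G (sphere (0 : F) 1)] [IsCancelSMul G (sphere (0 : F) 1)]

lemma exists_isOrbitEscaping_sphere [FiniteDimensional ℝ F] (heven : Even (Module.finrank ℝ F)) :
    ∃ Φ : C(ℝ × sphere (0 : F) 1, sphere (0 : F) 1), IsOrbitEscaping G Φ := by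
  obtain ⟨k, hk⟩ := heven
  have hk' : Module.finrank ℝ F = Module.finrank ℝ (EuclideanSpace ℂ (Fin k)) := by
    rw [finrank_real_of_complex, finrank_euclideanSpace_fin, hk, two_mul]
  obtain ⟨e⟩ := nonempty_homeomorph_sphere_of_finrank_eq hk'
  exact ⟨rotationFlow e, isOrbitEscaping_rotationFlow e⟩

variable {m n : ℕ} [Fact (Module.finrank ℝ E = m + 1)] [Fact (Module.finrank ℝ F = n + 1)]

lemma isLoose_circle_sphere_spaceForm (hn : Odd n)
    (f : C(UnitAddCircle, Quotient (MulAction.orbitRel G (sphere (0 : F) 1)))) :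
    IsLoose f f := by
  have hrank : Module.finrank ℝ F = n + 1 := Fact.out
  have := FiniteDimensional.of_fact_finrank_eq_succ (K := ℝ) (V := F) n
  obtain rfl | hn₂ : n = 1 ∨ 2 ≤ n := by grind
  · obtain ⟨e⟩ := nonempty_homeomorph_sphere_circle hrank
    exact isLoose_circle_of_hasEscapingSquare (rotationFlow_zero e)
      (isOrbitEscaping_rotationFlow e).hasEscapingSquare_rotationFlow isCoveringMap_orbitProj f
  · obtain ⟨Φ, hΦ⟩ := exists_isOrbitEscaping_sphere (G := G) (hrank ▸ hn.add_one)
    refine isLoose_circle_of_hasEscapingSquare hΦ.zero_apply (fun g y => ?_)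
      isCoveringMap_orbitProj f
    obtain ⟨φ, hφ, hrange⟩ := exists_isOpenEmbedding_range_eq_compl_singleton (-(g • y))
    exact hΦ.hasEscapingSquare_of_isOpenEmbedding
      (one_lt_rank_orthogonal_span_singleton hn₂ _) hφ
      (by rw [hrange]; exact ne_neg_of_mem_unit_sphere ℝ (g • y))

lemma isLoose_sphere_sphere_spaceForm (hm : 1 ≤ m) (hn : Odd n)
    (f : C(sphere (0 : E) 1, Quotient (MulAction.orbitRel G (sphere (0 : F) 1)))) :
    IsLoose f f := by
  obtain rfl | hm₂ := hm.eq_or_lt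
  · obtain ⟨e⟩ := nonempty_homeomorph_sphere_circle (E := E) Fact.out
    let e' : sphere (0 : E) 1 ≃ₜ UnitAddCircle :=
      e.trans (AddCircle.homeomorphCircle one_ne_zero).symm
    let r : C(sphere (0 : E) 1, UnitAddCircle) := e'
    let s : C(UnitAddCircle, sphere (0 : E) 1) := e'.symm
    have hsr : (f.comp s).comp r = f :=
      ContinuousMap.ext fun x => congrArg f (e'.symm_apply_apply x)
    exact hsr ▸ (isLoose_circle_sphere_spaceForm hn (f.comp s)).comp r
  · have hrank : Module.finrank ℝ F = n + 1 := Fact.out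
    have := FiniteDimensional.of_fact_finrank_eq_succ (K := ℝ) (V := F) n
    obtain ⟨Φ, hΦ⟩ := exists_isOrbitEscaping_sphere (G := G) (hrank ▸ hn.add_one)
    obtain ⟨f', hf'⟩ := exists_lift_sphere hm₂ isCoveringMap_orbitProj surjective_orbitProj f
    exact hΦ.isLoose_of_lift hf'

end SpaceForm

theorem mcc_eq_zero_of_homotopic_sphere_space_form
    (n : ℕ) (hn : 1 ≤ n) (hodd : Odd n)
    (G : Type*) [Group G] [Finite G]
    [MulAction G (Metric.sphere (0 : EuclideanSpace ℝ (Fin (n + 1))) 1)]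
    (hcont : ∀ g : G,
      Continuous fun x : Metric.sphere (0 : EuclideanSpace ℝ (Fin (n + 1))) 1 => g • x)
    (hfree : ∀ (g : G) (x : Metric.sphere (0 : EuclideanSpace ℝ (Fin (n + 1))) 1),
      g • x = x → g = 1)
    (m : ℕ) (hm : 1 ≤ m)
    (f₁ f₂ : C(Metric.sphere (0 : EuclideanSpace ℝ (Fin (m + 1))) 1,
      Quotient (MulAction.orbitRel G (Metric.sphere (0 : EuclideanSpace ℝ (Fin (n + 1))) 1))))
    (h : f₁.Homotopic f₂) :
    MCC f₁ f₂ = 0 ∧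
      ∃ f₁' f₂' : C(Metric.sphere (0 : EuclideanSpace ℝ (Fin (m + 1))) 1,
          Quotient (MulAction.orbitRel G (Metric.sphere (0 : EuclideanSpace ℝ (Fin (n + 1))) 1))),
        f₁'.Homotopic f₁ ∧ f₂'.Homotopic f₂ ∧ ∀ x, f₁' x ≠ f₂' x := by
  have : ContinuousConstSMul G (sphere (0 : EuclideanSpace ℝ (Fin (n + 1))) 1) := ⟨hcont⟩
  have : IsCancelSMul G (sphere (0 : EuclideanSpace ℝ (Fin (n + 1))) 1) :=
    isCancelSMul_iff_eq_one_of_smul_eq.mpr hfree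
  have (k : ℕ) : Fact (Module.finrank ℝ (EuclideanSpace ℝ (Fin k)) = k) :=
    ⟨finrank_euclideanSpace_fin⟩
  have hloose : IsLoose f₁ f₂ := (isLoose_sphere_sphere_spaceForm hm hodd f₁).trans_homotopic h
  exact ⟨hloose.mcc_eq_zero, hloose⟩
end

section
/- Let n ≥ 1 be odd, let G be a finite group acting freely and continuously on the unit sphere Sⁿ ⊂ ℝⁿ⁺¹, and let N = Sⁿ/G be the orbit space with the quotient topology. Let 1 ≤ m < n and let f₁, f₂ : Sᵐ → N be any continuous maps. Then MCC(f₁, f₂) = 0; that is, there exist continuous maps f₁' homotopic to f₁ and f₂' homotopic to f₂ with f₁'(x) ≠ f₂'(x) for every x ∈ Sᵐ. -/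
/-!
Let `S(W)` and `S(V)` be unit spheres with `dim W < dim V`, and let `p : S(V) → N` be a covering.
The complement of a point `e` of `S(W)` is a Euclidean space, so the restriction to it of a map
`f : S(W) → N` lifts to `S(V)`. If `f e ≠ y`, then for dimension reasons the lift can be pushed off
the finite fibre over `y` by a compactly supported homotopy; projecting back to `N`, this pushes `f`
off `y` without moving `f e`.

Consequently `f₁` and `f₂` may be deformed so that `f₁` avoids `f₂ e` and `f₂` avoids `f₁ (-e)`.
Precomposing `f₁` and `f₂` with maps homotopic to the identity which collapse one of two opposite
hemispheres to its pole makes `f₁` constant on one hemisphere and `f₂` constant on the other, and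
no coincidence survives.
-/

open Metric Module Set Topology
open scoped unitInterval RealInnerProductSpace Pointwise

theorem MCC_eq_zero_iff {M N : Type*} [TopologicalSpace M] [TopologicalSpace N] {f₁ f₂ : C(M, N)} :
    MCC f₁ f₂ = 0 ↔
      ∃ g₁ g₂ : C(M, N), g₁.Homotopic f₁ ∧ g₂.Homotopic f₂ ∧ ∀ x, g₁ x ≠ g₂ x := by
  simp only [MCC, ENat.iInf_eq_zero, ENat.card_eq_zero_iff_empty,
    ConnectedComponents.isEmpty_iff_isEmpty, isEmpty_subtype, exists_prop, exists_and_left, ne_eq]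

section Topology

theorem finite_preimage_singleton_of_isLocallyInjective {X N : Type*} [TopologicalSpace X]
    [CompactSpace X] {p : X → N} (hp : IsLocallyInjective p) (y : N) : (p ⁻¹' {y}).Finite := by
  choose U hU hxU hinj using hp
  obtain ⟨t, ht⟩ := isCompact_univ.elim_finite_subcover U hU fun x _ => mem_iUnion.2 ⟨x, hxU x⟩
  have hfin (x : X) : (p ⁻¹' {y} ∩ U x).Finite :=
    Subsingleton.finite fun a ha b hb => hinj x ha.2 hb.2 (ha.1.trans hb.1.symm)
  refine (t.finite_toSet.biUnion fun x _ => hfin x).subset fun x hx => ?_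
  obtain ⟨i, hi, hxi⟩ := mem_iUnion₂.1 (ht (mem_univ x))
  exact mem_biUnion hi ⟨hx, hxi⟩

theorem infinite_of_isLocallyInjective {X N : Type*} [TopologicalSpace X] [CompactSpace X]
    [Infinite X] {p : X → N} (hp : IsLocallyInjective p) : Infinite N := by
  by_contra! hN
  refine infinite_univ (α := X) <| .of_finite_fibers p (toFinite _) fun y _ => ?_
  exact (finite_preimage_singleton_of_isLocallyInjective hp y).inter_of_right _

theorem exists_homotopicRel_comp_eq_of_isOpenEmbedding {X Y N : Type*} [TopologicalSpace X]
    [T2Space X] [TopologicalSpace Y] [TopologicalSpace N] {f : C(X, N)} {j : C(Y, X)}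
    (hj : IsOpenEmbedding j) {g : C(Y, N)} {K : Set Y} (hK : IsCompact K)
    (h : (f.comp j).HomotopicRel g Kᶜ) :
    ∃ f' : C(X, N), f.HomotopicRel f' (range j)ᶜ ∧ f'.comp j = g := by
  obtain ⟨H⟩ := h
  let J : I × Y → I × X := Prod.map id j
  have hJ : IsOpenEmbedding J := .prodMap .id hj
  let H' : I × X → N := Function.extend J H fun q => f q.2
  have hH'j (t : I) (z : Y) : H' (t, j z) = H (t, z) := hJ.injective.extend_apply H _ (t, z)
  have hH'K (q : I × X) (hq : q.2 ∉ j '' K) : H' q = f q.2 := by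
    by_cases hqJ : ∃ a, J a = q
    · obtain ⟨⟨t, z⟩, rfl⟩ := hqJ
      exact (hH'j t z).trans (H.eq_fst t fun hz => hq ⟨z, hz, rfl⟩)
    · exact Function.extend_apply' _ _ _ hqJ
  have hrange (t : I) (x : X) (hx : x ∈ (range j)ᶜ) : H' (t, x) = f x :=
    hH'K _ fun hxK => hx (image_subset_range j K hxK)
  have hcont : Continuous H' := continuous_iff_continuousAt.2 fun q => by
    by_cases hq : q.2 ∈ j '' K
    · obtain ⟨t, x⟩ := q
      obtain ⟨z, -, rfl : j z = x⟩ := hq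
      rw [← show J (t, z) = (t, j z) from rfl, ← hJ.continuousAt_iff]
      exact H.continuous.continuousAt.congr (.of_forall fun a => (hH'j a.1 a.2).symm)
    · have hU : IsOpen {q : I × X | q.2 ∉ j '' K} :=
        ((hK.image j.continuous).isClosed.preimage continuous_snd).isOpen_compl
      refine ContinuousAt.congr (f := fun q : I × X => f q.2) (by fun_prop) ?_
      filter_upwards [hU.mem_nhds hq] with q hq using (hH'K q hq).symm
  let f' : C(X, N) := ⟨fun x => H' (1, x), by fun_prop⟩
  refine ⟨f', ⟨⟨⟨⟨H', hcont⟩, fun x => ?_, fun x => rfl⟩, hrange⟩⟩, ?_⟩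
  · by_cases hx : x ∈ range j
    · obtain ⟨z, rfl⟩ := hx
      exact (hH'j 0 z).trans (H.apply_zero z)
    · exact hrange 0 x hx
  · ext z
    exact (hH'j 1 z).trans (H.apply_one z)

end Topology

section UnitSphere

variable {X V : Type*} [TopologicalSpace X] [NormedAddCommGroup V] [NormedSpace ℝ V]

/-- The radial projection to the unit sphere of a nowhere vanishing continuous map. -/
noncomputable def toUnitSphere (w : C(X, V)) (hw : ∀ x, w x ≠ 0) : C(X, sphere (0 : V) 1) where
  toFun x := ⟨NormedSpace.normalize (w x), by simpa using hw x⟩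
  continuous_toFun := by
    have hw' (x : X) : ‖w x‖ ≠ 0 := norm_ne_zero_iff.2 (hw x)
    exact ((w.continuous.norm.inv₀ hw').smul w.continuous).subtype_mk _

theorem norm_smul_toUnitSphere (w : C(X, V)) (hw : ∀ x, w x ≠ 0) (x : X) :
    ‖w x‖ • (toUnitSphere w hw x : V) = w x :=
  NormedSpace.norm_smul_normalize (w x)

theorem toUnitSphere_eq_of_eq {w : C(X, V)} {hw : ∀ x, w x ≠ 0} {x : X} {u : sphere (0 : V) 1}
    (h : w x = u) : toUnitSphere w hw x = u :=
  Subtype.ext <| (congrArg NormedSpace.normalize h).trans <|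
    NormedSpace.normalize_eq_self_of_norm_eq_one (norm_eq_of_mem_sphere u)

theorem homotopicRel_toUnitSphere (f : C(X, sphere (0 : V) 1)) (w : C(X, V))
    (h : ∀ x, (0 : V) ∉ segment ℝ (f x : V) (w x)) {S : Set X} (hS : ∀ x ∈ S, w x = f x) :
    f.HomotopicRel
      (toUnitSphere w fun x => ne_of_mem_of_not_mem (right_mem_segment ℝ _ _) (h x)) S := by
  let H : C(I × X, V) := ⟨fun q => (1 - q.1 : ℝ) • (f q.2 : V) + (q.1 : ℝ) • w q.2, by fun_prop⟩
  have hH (q : I × X) : H q ≠ 0 := fun hq =>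
    h q.2 ⟨1 - q.1, q.1, sub_nonneg.2 q.1.2.2, q.1.2.1, sub_add_cancel _ _, hq⟩
  refine ⟨⟨⟨toUnitSphere H hH, fun x => ?_, fun x => ?_⟩, fun t x hx => ?_⟩⟩
  · exact toUnitSphere_eq_of_eq (by simp [H])
  · exact Subtype.ext (congrArg NormedSpace.normalize (by simp [H]))
  · exact toUnitSphere_eq_of_eq (hw := hH) (by simp [H, hS x hx, ← add_smul])

theorem isClosed_Ici_zero_smul [FiniteDimensional ℝ V] {B : Set V} (hB : B.Finite) (h0 : 0 ∉ B) :
    IsClosed (Ici (0 : ℝ) • B) := by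
  rw [← iUnion_smul_right_image]
  exact hB.isClosed_biUnion fun b hb =>
    (isClosedEmbedding_smul_left (ne_of_mem_of_not_mem hb h0)).isClosedMap _ isClosed_Ici

theorem mem_Ici_zero_smul_image_coe_iff {B : Set (sphere (0 : V) 1)} {u : sphere (0 : V) 1} {r : ℝ}
    (hr : 0 < r) : r • (u : V) ∈ Ici (0 : ℝ) • ((↑) '' B : Set V) ↔ u ∈ B := by
  refine ⟨?_, fun hu => smul_mem_smul hr.le ⟨u, hu, rfl⟩⟩
  rintro ⟨s, hs, _, ⟨b, hb, rfl⟩, hsb : s • (b : V) = r • (u : V)⟩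
  have hsr : s = r := by
    simpa [norm_smul, abs_of_nonneg (mem_Ici.1 hs), abs_of_pos hr] using congrArg norm hsb
  have hbu : b = u := Subtype.ext (smul_right_injective V hr.ne' (hsr ▸ hsb))
  exact hbu ▸ hb

end UnitSphere

section GeneralPosition

variable {E V : Type*} [NormedAddCommGroup E] [NormedSpace ℝ E] [FiniteDimensional ℝ E]
  [NormedAddCommGroup V] [NormedSpace ℝ V] [FiniteDimensional ℝ V]

theorem exists_norm_lt_forall_add_notMem_submodule {P : E → V} (hP : ContDiff ℝ 1 P)
    {𝒮 : Set (Submodule ℝ V)} (h𝒮 : 𝒮.Countable) {d : ℕ} (hd : ∀ S ∈ 𝒮, finrank ℝ S ≤ d)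
    (hdim : finrank ℝ E + d < finrank ℝ V) {ε : ℝ} (hε : 0 < ε) :
    ∃ c : V, ‖c‖ < ε ∧ ∀ x, ∀ S ∈ 𝒮, P x + c ∉ S := by
  let bad (S : Submodule ℝ V) : Set V := range fun q : S × E => (q.1 : V) - P q.2
  have hbad : dimH (⋃ S ∈ 𝒮, bad S) < finrank ℝ V := by
    refine lt_of_le_of_lt (b := ((finrank ℝ E + d : ℕ) : ENNReal)) ?_ (by exact_mod_cast hdim)
    rw [dimH_bUnion h𝒮]
    refine iSup₂_le fun S hS => ?_
    have hsmooth : ContDiff ℝ 1 fun q : S × E => (q.1 : V) - P q.2 :=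
      (S.subtypeL.contDiff.comp contDiff_fst).sub (hP.comp contDiff_snd)
    refine hsmooth.dimH_range_le.trans ?_
    rw [finrank_prod, add_comm]
    exact_mod_cast Nat.add_le_add_left (hd S hS) _
  obtain ⟨c, hc, hcε⟩ := (dense_compl_of_dimH_lt_finrank hbad).exists_dist_lt 0 hε
  refine ⟨c, by simpa using hcε, fun x S hS hxS => hc ?_⟩
  exact mem_biUnion hS ⟨(⟨P x + c, hxS⟩, x), add_sub_cancel_left _ _⟩

theorem exists_continuousMap_near_forall_notMem (F : C(E, V)) {L : Set V} (hL : IsClosed L)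
    (hFL : IsCompact (F ⁻¹' L)) {𝒮 : Set (Submodule ℝ V)} (h𝒮 : 𝒮.Countable)
    (hL𝒮 : ∀ v ∈ L, ∃ S ∈ 𝒮, v ∈ S) {d : ℕ} (hd : ∀ S ∈ 𝒮, finrank ℝ S ≤ d)
    (hdim : finrank ℝ E + d < finrank ℝ V) {ε : ℝ} (hε : 0 < ε) :
    ∃ (w : C(E, V)) (K : Set E), IsCompact K ∧ (∀ x ∉ K, w x = F x) ∧
      (∀ x, ‖w x - F x‖ < ε) ∧ ∀ x, w x ∉ L := by
  obtain ⟨K₁, hK₁, hFK₁⟩ := exists_compact_superset hFL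
  obtain ⟨φ, hφ₁, -, hφc, hφI⟩ := exists_continuous_one_zero_of_isCompact hK₁ isClosed_empty
    (disjoint_empty K₁)
  -- On the shell where `φ` interpolates, `F` stays a positive distance away from `L`.
  obtain ⟨δ, hδ, hδL⟩ : ∃ δ, 0 < δ ∧ thickening δ (F '' (tsupport φ \ interior K₁)) ⊆ Lᶜ :=
    ((hφc.diff isOpen_interior).image F.continuous).exists_thickening_subset_open
      hL.isOpen_compl (image_subset_iff.2 fun x hx hxL => hx.2 (hFK₁ hxL))
  obtain ⟨η, hη, hηε, hηδ⟩ : ∃ η : ℝ, 0 < η ∧ η + η ≤ ε ∧ η + η ≤ δ :=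
    ⟨min ε δ / 2, half_pos (lt_min hε hδ), by simp, by simp⟩
  obtain ⟨P, hP, hPF, -⟩ := F.continuous.exists_contDiff_approx 1 (ε := fun _ => η)
    continuous_const fun _ => hη
  obtain ⟨c, hc, hcL⟩ := exists_norm_lt_forall_add_notMem_submodule hP h𝒮 hd hdim hη
  have hPcont := hP.continuous
  let w : C(E, V) := ⟨fun x => F x + φ x • (P x + c - F x), by fun_prop⟩
  have hw (x : E) : ‖w x - F x‖ < η + η := calc
    ‖w x - F x‖ = φ x * ‖(P x - F x) + c‖ := by
      simp [w, norm_smul, abs_of_nonneg (hφI x).1, sub_add_eq_add_sub]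
    _ ≤ ‖P x - F x‖ + ‖c‖ :=
      (mul_le_of_le_one_left (norm_nonneg _) (hφI x).2).trans (norm_add_le _ _)
    _ < η + η := add_lt_add (dist_eq_norm (P x) (F x) ▸ hPF x) hc
  have hwF (x : E) (hx : x ∉ tsupport φ) : w x = F x := by
    simp [w, image_eq_zero_of_notMem_tsupport hx]
  refine ⟨w, tsupport φ, hφc, hwF, fun x => (hw x).trans_le hηε, fun x hxL => ?_⟩
  by_cases hxK : x ∈ interior K₁
  · have hwx : w x = P x + c := by simp [w, hφ₁ (interior_subset hxK)]
    obtain ⟨S, hS, hxS⟩ := hL𝒮 _ hxL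
    exact hcL x S hS (hwx ▸ hxS)
  by_cases hxφ : x ∈ tsupport φ
  · refine hδL (mem_thickening_iff.2 ⟨F x, mem_image_of_mem F ⟨hxφ, hxK⟩, ?_⟩) hxL
    exact (dist_eq_norm (w x) (F x) ▸ hw x).trans_le hηδ
  · exact hxK (hFK₁ (hwF x hxφ ▸ hxL : F x ∈ L))

theorem exists_homotopicRel_compl_forall_notMem_of_finite (hdim : finrank ℝ E + 1 < finrank ℝ V)
    (F : C(E, sphere (0 : V) 1)) {B : Set (sphere (0 : V) 1)} (hB : B.Finite)
    (hFB : IsCompact (F ⁻¹' B)) :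
    ∃ (F' : C(E, sphere (0 : V) 1)) (K : Set E),
      IsCompact K ∧ F.HomotopicRel F' Kᶜ ∧ ∀ x, F' x ∉ B := by
  let Fv : C(E, V) := ⟨fun x => F x, by fun_prop⟩
  let L : Set V := Ici (0 : ℝ) • ((↑) '' B : Set V)
  have hL : IsClosed L := isClosed_Ici_zero_smul (hB.image _) <| by
    rintro ⟨b, -, hb⟩
    exact ne_zero_of_mem_unit_sphere b hb
  have hFL : Fv ⁻¹' L = F ⁻¹' B := by
    ext x
    rw [mem_preimage, mem_preimage, ← mem_Ici_zero_smul_image_coe_iff one_pos, one_smul]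
    rfl
  have hlines : ((fun b : sphere (0 : V) 1 => ℝ ∙ (b : V)) '' B).Finite := hB.image _
  obtain ⟨w, K, hK, hwK, hwF, hwL⟩ := exists_continuousMap_near_forall_notMem Fv hL
    (hFL ▸ hFB) hlines.countable
    (by
      rintro _ ⟨s, -, _, ⟨b, hb, rfl⟩, rfl⟩
      exact ⟨ℝ ∙ (b : V), mem_image_of_mem _ hb,
        Submodule.smul_mem _ s (Submodule.mem_span_singleton_self _)⟩)
    (forall_mem_image.2 fun b _ => (finrank_span_singleton (ne_zero_of_mem_unit_sphere b)).le)
    hdim one_pos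
  have hseg (x : E) : (0 : V) ∉ segment ℝ (F x : V) (w x) := fun h => by
    have hball : segment ℝ (F x : V) (w x) ⊆ ball (F x : V) 1 :=
      (convex_ball _ _).segment_subset (mem_ball_self one_pos) (mem_ball_iff_norm.2 (hwF x))
    simpa using hball h
  refine ⟨_, K, hK, homotopicRel_toUnitSphere F w hseg hwK, fun x hx => hwL x ?_⟩
  have hw (x : E) : w x ≠ 0 := ne_of_mem_of_not_mem (right_mem_segment ℝ _ _) (hseg x)
  rw [← norm_smul_toUnitSphere w hw]
  exact (mem_Ici_zero_smul_image_coe_iff (norm_pos_iff.2 (hw x))).2 hx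

end GeneralPosition

section Hemisphere

variable {W N : Type*} [NormedAddCommGroup W] [InnerProductSpace ℝ W] [TopologicalSpace N]

theorem exists_homotopic_id_forall_inner_nonpos_eq_neg (e : sphere (0 : W) 1) :
    ∃ r : C(sphere (0 : W) 1, sphere (0 : W) 1), r.Homotopic (.id _) ∧
      ∀ x : sphere (0 : W) 1, ⟪(x : W), e⟫ ≤ 0 → r x = -e := by
  let u (x : sphere (0 : W) 1) : ℝ := max ⟪(x : W), e⟫ 0
  let w : C(sphere (0 : W) 1, W) := ⟨fun x => u x • (x : W) - (1 - u x) • (e : W), by fun_prop⟩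
  have hw (x : sphere (0 : W) 1) : (0 : W) ∉ segment ℝ (x : W) (w x) := by
    rintro ⟨a, b, ha, hb, hab, h⟩
    have hx : a + b * (u x - (1 - u x) * ⟪(x : W), e⟫) = 0 := by
      simpa [w, inner_add_right, inner_sub_right, inner_smul_right] using
        congrArg (fun v : W => ⟪(x : W), v⟫) h
    have he : a * ⟪(x : W), e⟫ + b * (u x * ⟪(x : W), e⟫ - (1 - u x)) = 0 := by
      simpa [w, inner_add_left, inner_sub_left, inner_smul_left] using
        congrArg (fun v : W => ⟪v, (e : W)⟫) h
    rcases le_or_gt ⟪(x : W), e⟫ 0 with hc | hc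
    · simp only [u, max_eq_right hc] at hx he
      have hbc : b * ⟪(x : W), e⟫ ≤ 0 := mul_nonpos_of_nonneg_of_nonpos hb hc
      have ha0 : a = 0 := by linarith
      rw [ha0] at he hab
      linarith
    · simp only [u, max_eq_left hc.le] at hx
      have hbc : 0 ≤ b * ⟪(x : W), e⟫ ^ 2 := by positivity
      have hb0 : b * ⟪(x : W), e⟫ ^ 2 = 0 := by linarith
      rw [mul_eq_zero_iff_right (pow_pos hc 2).ne'] at hb0
      linarith
  exact ⟨_, (homotopicRel_toUnitSphere (.id _) w hw (S := ∅) (by simp)).homotopic.symm,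
    fun x hx => toUnitSphere_eq_of_eq (by simp [w, u, hx])⟩

theorem exists_homotopic_forall_ne_of_forall_ne_apply {f₁ f₂ : C(sphere (0 : W) 1, N)}
    (e : sphere (0 : W) 1) (h₁ : ∀ x, f₁ x ≠ f₂ e) (h₂ : ∀ x, f₂ x ≠ f₁ (-e)) :
    ∃ g₁ g₂ : C(sphere (0 : W) 1, N),
      g₁.Homotopic f₁ ∧ g₂.Homotopic f₂ ∧ ∀ x, g₁ x ≠ g₂ x := by
  obtain ⟨r₁, hr₁, hr₁e⟩ := exists_homotopic_id_forall_inner_nonpos_eq_neg e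
  obtain ⟨r₂, hr₂, hr₂e⟩ := exists_homotopic_id_forall_inner_nonpos_eq_neg (-e)
  refine ⟨f₁.comp r₁, f₂.comp r₂, .comp (.refl f₁) hr₁, .comp (.refl f₂) hr₂, fun x hx => ?_⟩
  simp only [ContinuousMap.comp_apply] at hx
  rcases le_total ⟪(x : W), e⟫ 0 with h | h
  · exact h₂ (r₂ x) (hr₁e x h ▸ hx.symm)
  · have hr₂x : r₂ x = e := by simpa using hr₂e x (by simpa using h)
    exact h₁ (r₁ x) (hr₂x ▸ hx)

theorem exists_isOpenEmbedding_range_eq_compl_singleton_s4 (e : sphere (0 : W) 1) :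
    ∃ j : C((ℝ ∙ (e : W))ᗮ, sphere (0 : W) 1), IsOpenEmbedding j ∧ range j = {e}ᶜ := by
  let stereo := stereographic (norm_eq_of_mem_sphere e)
  have hstereo : IsOpenEmbedding stereo.symm := stereo.symm.isOpenEmbedding rfl
  refine ⟨⟨stereo.symm, hstereo.continuous⟩, hstereo, ?_⟩
  exact image_univ.symm.trans stereo.symm.image_source_eq_target

end Hemisphere

section Covering

variable {V N : Type*} [NormedAddCommGroup V] [NormedSpace ℝ V] [FiniteDimensional ℝ V]
  [TopologicalSpace N] {p : sphere (0 : V) 1 → N}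

theorem exists_homotopicRel_compl_range_forall_ne {E X : Type*} [NormedAddCommGroup E]
    [NormedSpace ℝ E] [FiniteDimensional ℝ E] [TopologicalSpace X] [CompactSpace X] [T2Space X]
    (hdim : finrank ℝ E + 1 < finrank ℝ V) (hp : IsCoveringMap p) (hsurj : p.Surjective)
    {j : C(E, X)} (hj : IsOpenEmbedding j) (f : C(X, N)) {y : N} (hy : ∀ x ∉ range j, f x ≠ y) :
    ∃ f' : C(X, N), f.HomotopicRel f' (range j)ᶜ ∧ ∀ x, f' x ≠ y := by
  have hfin : (p ⁻¹' {y}).Finite :=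
    finite_preimage_singleton_of_isLocallyInjective hp.isLocalHomeomorph.isLocallyInjective y
  have hclosed : IsClosed {y} := (hp.isQuotientMap hsurj).isClosed_preimage.1 hfin.isClosed
  obtain ⟨z₀, hz₀⟩ := hsurj (f (j 0))
  obtain ⟨F, ⟨-, hF⟩, -⟩ := hp.existsUnique_continuousMap_lifts (f.comp j) 0 z₀ hz₀
  have hcompact : IsCompact (F ⁻¹' (p ⁻¹' {y})) := by
    rw [← preimage_comp, hF, ContinuousMap.coe_comp, preimage_comp]
    exact hj.isInducing.isCompact_preimage' (hclosed.preimage f.continuous).isCompact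
      fun x hx => by_contra fun hxj => hy x hxj hx
  obtain ⟨F', K, hK, hFF', hF'⟩ :=
    exists_homotopicRel_compl_forall_notMem_of_finite hdim F hfin hcompact
  let π : C(sphere (0 : V) 1, N) := ⟨p, hp.continuous⟩
  have hlift : π.comp F = f.comp j := DFunLike.coe_injective hF
  obtain ⟨f', hff', hf'j⟩ := exists_homotopicRel_comp_eq_of_isOpenEmbedding hj hK
    (hlift ▸ hFF'.comp_continuousMap π)
  refine ⟨f', hff', fun x hx => ?_⟩
  by_cases hxj : x ∈ range j
  · obtain ⟨z, rfl⟩ := hxj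
    exact hF' z ((DFunLike.congr_fun hf'j z).symm.trans hx)
  · exact hy x hxj ((hff'.fst_eq_snd hxj).trans hx)

theorem pathConnectedSpace_and_nontrivial_of_isCoveringMap (hV : 1 < finrank ℝ V)
    (hp : IsCoveringMap p) (hsurj : p.Surjective) : PathConnectedSpace N ∧ Nontrivial N := by
  have : PathConnectedSpace (sphere (0 : V) 1) := isPathConnected_iff_pathConnectedSpace.1 <|
    isPathConnected_sphere (lt_rank_of_lt_finrank hV) 0 zero_le_one
  have : Nontrivial (sphere (0 : V) 1) :=
    let ⟨x⟩ : Nonempty (sphere (0 : V) 1) := inferInstance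
    ⟨x, -x, ne_neg_of_mem_unit_sphere ℝ x⟩
  have : Infinite (sphere (0 : V) 1) := PreconnectedSpace.infinite
  have : Infinite N := infinite_of_isLocallyInjective hp.isLocalHomeomorph.isLocallyInjective
  exact ⟨hsurj.pathConnectedSpace hp.continuous, inferInstance⟩

variable {W : Type*} [NormedAddCommGroup W] [InnerProductSpace ℝ W] [FiniteDimensional ℝ W]

theorem exists_homotopicRel_singleton_forall_ne (hdim : finrank ℝ W < finrank ℝ V)
    (hp : IsCoveringMap p) (hsurj : p.Surjective) (f : C(sphere (0 : W) 1, N))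
    {e : sphere (0 : W) 1} {y : N} (hy : f e ≠ y) :
    ∃ f' : C(sphere (0 : W) 1, N), f.HomotopicRel f' {e} ∧ ∀ x, f' x ≠ y := by
  obtain ⟨j, hj, hrange⟩ := exists_isOpenEmbedding_range_eq_compl_singleton_s4 e
  have hdim' : finrank ℝ (ℝ ∙ (e : W))ᗮ + 1 < finrank ℝ V := by
    rwa [← (ℝ ∙ (e : W)).finrank_add_finrank_orthogonal, add_comm,
      finrank_span_singleton (ne_zero_of_mem_unit_sphere e)] at hdim
  obtain ⟨f', hff', hf'⟩ := exists_homotopicRel_compl_range_forall_ne hdim' hp hsurj hj f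
    (y := y) (by simpa [hrange] using hy)
  exact ⟨f', by simpa [hrange] using hff', hf'⟩

theorem exists_homotopic_forall_ne [Nontrivial W] (hdim : finrank ℝ W < finrank ℝ V)
    (hp : IsCoveringMap p) (hsurj : p.Surjective) (f : C(sphere (0 : W) 1, N)) (y : N) :
    ∃ f' : C(sphere (0 : W) 1, N), f'.Homotopic f ∧ ∀ x, f' x ≠ y := by
  by_cases! hf : ∃ e, f e ≠ y
  · obtain ⟨e, he⟩ := hf
    obtain ⟨f', hff', hf'⟩ := exists_homotopicRel_singleton_forall_ne hdim hp hsurj f he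
    exact ⟨f', hff'.homotopic.symm, hf'⟩
  · have hV : 1 < finrank ℝ V := (Nat.succ_le_of_lt finrank_pos).trans_lt hdim
    obtain ⟨_, _⟩ := pathConnectedSpace_and_nontrivial_of_isCoveringMap hV hp hsurj
    obtain ⟨b, hb⟩ := exists_ne y
    have : Nonempty (sphere (0 : W) 1) :=
      (NormedSpace.sphere_nonempty.2 zero_le_one).to_subtype
    obtain rfl : f = .const _ y := ContinuousMap.ext hf
    exact ⟨.const _ b, ContinuousMap.homotopic_const_iff.2 (PathConnectedSpace.joined b y),
      fun _ => hb⟩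

theorem mcc_eq_zero_of_low_dim_sphere_space_form_general (hdim : finrank ℝ W < finrank ℝ V)
    (hp : IsCoveringMap p) (hsurj : p.Surjective) (f₁ f₂ : C(sphere (0 : W) 1, N)) :
    MCC f₁ f₂ = 0 ∧ ∃ f₁' f₂' : C(sphere (0 : W) 1, N),
      f₁'.Homotopic f₁ ∧ f₂'.Homotopic f₂ ∧ ∀ x, f₁' x ≠ f₂' x := by
  rw [MCC_eq_zero_iff, and_self]
  rcases subsingleton_or_nontrivial W with _ | _
  · exact ⟨f₁, f₂, .refl f₁, .refl f₂, isEmptyElim⟩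
  obtain ⟨e, he⟩ : (sphere (0 : W) 1).Nonempty := NormedSpace.sphere_nonempty.2 zero_le_one
  lift e to sphere (0 : W) 1 using he
  obtain ⟨g₂, hg₂, hg₂e⟩ := exists_homotopic_forall_ne hdim hp hsurj f₂ (f₁ (-e))
  obtain ⟨g₁, hg₁, hg₁e⟩ :=
    exists_homotopicRel_singleton_forall_ne hdim hp hsurj f₁ (hg₂e e).symm
  obtain ⟨f₁', f₂', hf₁', hf₂', hne⟩ :=
    exists_homotopic_forall_ne_of_forall_ne_apply e hg₁e (hg₁.fst_eq_snd rfl ▸ hg₂e)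
  exact ⟨f₁', f₂', hf₁'.trans hg₁.homotopic.symm, hf₂'.trans hg₂, hne⟩

end Covering

theorem isCoveringMap_quotientMk_orbitRel_of_finite {G X : Type*} [Group G] [Finite G]
    [TopologicalSpace X] [T2Space X] [WeaklyLocallyCompactSpace X] [MulAction G X]
    [ContinuousConstSMul G X] (hfree : ∀ (g : G) (x : X), g • x = x → g = 1) :
    IsCoveringMap (Quotient.mk (MulAction.orbitRel G X)) :=
  have : IsCancelSMul G X := isCancelSMul_iff_eq_one_of_smul_eq.2 hfree
  isQuotientCoveringMap_quotientMk_of_properlyDiscontinuousSMul (G := G) |>.isCoveringMap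

theorem mcc_eq_zero_of_low_dim_sphere_space_form
    (n : ℕ) (hn : 1 ≤ n) (hodd : Odd n)
    (G : Type*) [Group G] [Finite G]
    [MulAction G (Metric.sphere (0 : EuclideanSpace ℝ (Fin (n + 1))) 1)]
    (hcont : ∀ g : G,
      Continuous fun x : Metric.sphere (0 : EuclideanSpace ℝ (Fin (n + 1))) 1 => g • x)
    (hfree : ∀ (g : G) (x : Metric.sphere (0 : EuclideanSpace ℝ (Fin (n + 1))) 1),
      g • x = x → g = 1)
    (m : ℕ) (hm : 1 ≤ m) (hmn : m < n)
    (f₁ f₂ : C(Metric.sphere (0 : EuclideanSpace ℝ (Fin (m + 1))) 1,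
      Quotient (MulAction.orbitRel G (Metric.sphere (0 : EuclideanSpace ℝ (Fin (n + 1))) 1))))
    :
    MCC f₁ f₂ = 0 ∧
      ∃ f₁' f₂' : C(Metric.sphere (0 : EuclideanSpace ℝ (Fin (m + 1))) 1,
          Quotient (MulAction.orbitRel G (Metric.sphere (0 : EuclideanSpace ℝ (Fin (n + 1))) 1))),
        f₁'.Homotopic f₁ ∧ f₂'.Homotopic f₂ ∧ ∀ x, f₁' x ≠ f₂' x := by
  have : ContinuousConstSMul G (sphere (0 : EuclideanSpace ℝ (Fin (n + 1))) 1) := ⟨hcont⟩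
  exact mcc_eq_zero_of_low_dim_sphere_space_form_general (by simpa using hmn)
    (isCoveringMap_quotientMk_orbitRel_of_finite hfree) Quotient.mk_surjective f₁ f₂
end
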